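/- Let u : ℝ^d → ℝ^d be continuous and x* ∈ ℝ^d be such that u(x*) = 0 and ⟨u(x), x − x*⟩ > 0 for all x ≠ x*. Let (γ_n)_{n≥1} be positive reals with γ_n → 0 and ∑_n γ_n = ∞, let (ε_n) be a sequence in ℝ^d with ε_n → 0, and let (x_n) be a sequence in ℝ^d contained in some compact subset of ℝ^d and satisfying the recursion x_{n+1} = x_n − γ_{n+1} u(x_n) + γ_{n+1} ε_n for all n. Then x_n → x* as n → ∞. -/

import Mathlib

open MeasureTheory ProbabilityTheory Filter Finset Classical
open scoped RealInnerProductSpace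

/-!
The squared distance `V n = ‖x n - x*‖ ^ 2` is a Lyapunov function: expanding the square gives
`V (n + 1) = V n - γ * (φ n - δ n)` with `φ n = 2 * ⟪u (x n), x n - x*⟫ ≥ 0` and `δ n → 0`.
By compactness `φ` is bounded away from `0` wherever `V ≥ η`, so there `V` loses at least a fixed
multiple of the step size `γ` once `δ` is small. As the step sizes have infinite sum, `V` falls
below `η` again and again; as its upward jumps tend to `0` and start only from below `η`, it
eventually stays below `2 * η`.
-/

section Descent

variable {V γ φ δ : ℕ → ℝ} {b c η τ : ℝ}

theorem frequently_lt_of_eventually_descent (hV : ∀ n, b ≤ V n) (hc : 0 < c)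
    (hγdiv : Tendsto (fun N => ∑ n ∈ Finset.range N, γ n) atTop atTop)
    (hdesc : ∀ᶠ n in atTop, η ≤ V n → V (n + 1) ≤ V n - c * γ n) :
    ∃ᶠ n in atTop, V n < η := by
  intro hlarge
  let W : ℕ → ℝ := fun n => V n + c * ∑ k ∈ Finset.range n, γ k
  have hW : Tendsto W atTop atTop :=
    tendsto_atTop_add_left_of_le atTop b hV (hγdiv.const_mul_atTop hc)
  obtain ⟨N, hN⟩ := eventually_atTop.1 (hlarge.and hdesc)
  have hW_le : ∀ n ≥ N, W n ≤ W N := by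
    intro n hn
    induction n, hn using Nat.le_induction with
    | base => exact le_rfl
    | succ n hn ih =>
      have hstep := (hN n hn).2 (not_lt.1 (hN n hn).1)
      simp only [W, Finset.sum_range_succ, mul_add] at ih ⊢
      linarith
  obtain ⟨n, hWn, hn⟩ := ((hW.eventually_gt_atTop (W N)).and (eventually_ge_atTop N)).exists
  exact hWn.not_ge (hW_le n hn)

theorem eventually_lt_add_of_frequently_lt (hfreq : ∃ᶠ n in atTop, V n < η) (hτ : 0 ≤ τ)
    (hdesc : ∀ᶠ n in atTop, η ≤ V n → V (n + 1) ≤ V n)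
    (hjump : ∀ᶠ n in atTop, V (n + 1) ≤ V n + τ) :
    ∀ᶠ n in atTop, V n < η + τ := by
  obtain ⟨N, hN⟩ := eventually_atTop.1 (hdesc.and hjump)
  obtain ⟨m, hm, hVm⟩ := frequently_atTop.1 hfreq N
  filter_upwards [eventually_ge_atTop m] with n hn
  induction n, hn using Nat.le_induction with
  | base => linarith
  | succ n hn ih =>
    obtain ⟨hdesc_n, hjump_n⟩ := hN n (hm.trans hn)
    rcases lt_or_ge (V n) η with hlt | hge
    · linarith
    · exact (hdesc_n hge).trans_lt ih

theorem tendsto_zero_of_perturbed_descent (hV : ∀ n, 0 ≤ V n) (hγ : ∀ n, 0 ≤ γ n)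
    (hγ0 : Tendsto γ atTop (nhds 0))
    (hγdiv : Tendsto (fun N => ∑ n ∈ Finset.range N, γ n) atTop atTop)
    (hδ : Tendsto δ atTop (nhds 0)) (hφ : ∀ n, 0 ≤ φ n)
    (hφ_pos : ∀ η > 0, ∃ c > 0, ∀ᶠ n in atTop, η ≤ V n → c ≤ φ n)
    (hstep : ∀ n, V (n + 1) ≤ V n - γ n * (φ n - δ n)) :
    Tendsto V atTop (nhds 0) := by
  refine tendsto_order.2
    ⟨fun a ha => .of_forall fun n => ha.trans_le (hV n), fun r hr => ?_⟩
  obtain ⟨c, hc, hφc⟩ := hφ_pos (r / 2) (half_pos hr)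
  have hdesc : ∀ᶠ n in atTop, r / 2 ≤ V n → V (n + 1) ≤ V n - c / 2 * γ n := by
    filter_upwards [hφc, hδ.eventually_le_const (half_pos hc)] with n hφn hδn hVn
    have hgain : c / 2 ≤ φ n - δ n := by linarith [hφn hVn]
    linarith [hstep n, mul_le_mul_of_nonneg_left hgain (hγ n)]
  have hdecr : ∀ᶠ n in atTop, r / 2 ≤ V n → V (n + 1) ≤ V n := by
    filter_upwards [hdesc] with n hn hVn
    linarith [hn hVn, mul_nonneg (half_pos hc).le (hγ n)]
  have hjump : ∀ᶠ n in atTop, V (n + 1) ≤ V n + r / 2 := by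
    have hγδ : Tendsto (fun n => γ n * δ n) atTop (nhds 0) := by simpa using hγ0.mul hδ
    filter_upwards [hγδ.eventually_le_const (half_pos hr)] with n hn
    linarith [hstep n, mul_nonneg (hγ n) (hφ n)]
  have hfreq := frequently_lt_of_eventually_descent hV (half_pos hc) hγdiv hdesc
  simpa only [add_halves] using
    eventually_lt_add_of_frequently_lt hfreq (half_pos hr).le hdecr hjump

end Descent

theorem tendsto_mul_norm_sub_sq_zero {E : Type*} [SeminormedAddCommGroup E]
    {ι : Type*} {l : Filter ι} {γ : ι → ℝ} {v e : ι → E} {B : ℝ}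
    (hγ0 : Tendsto γ l (nhds 0)) (hv : ∀ i, ‖v i‖ ≤ B) (he : Tendsto e l (nhds 0)) :
    Tendsto (fun i => γ i * ‖v i - e i‖ ^ 2) l (nhds 0) := by
  have hbound : Tendsto (fun i => ‖γ i‖ * (B + ‖e i‖) ^ 2) l (nhds 0) := by
    simpa using hγ0.norm.mul ((he.norm.const_add B).pow 2)
  refine squeeze_zero_norm (fun i => ?_) hbound
  rw [norm_mul, norm_pow, norm_norm]
  gcongr
  exact (norm_sub_le _ _).trans (by gcongr; exact hv i)

section InnerProductSpace

variable {E : Type*} [NormedAddCommGroup E] [InnerProductSpace ℝ E]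

theorem norm_sub_smul_add_smul_sq (y v e : E) (t : ℝ) :
    ‖y - t • v + t • e‖ ^ 2
      = ‖y‖ ^ 2 - t * (2 * ⟪v, y⟫ - (2 * ⟪e, y⟫ + t * ‖v - e‖ ^ 2)) := by
  rw [sub_add, ← smul_sub, norm_sub_sq_real, real_inner_smul_right, norm_smul, mul_pow,
    Real.norm_eq_abs, sq_abs, inner_sub_right, real_inner_comm v y, real_inner_comm e y]
  ring

theorem tendsto_inner_zero_of_norm_le {ι : Type*} {l : Filter ι} {e y : ι → E} {M : ℝ}
    (he : Tendsto e l (nhds 0)) (hy : ∀ i, ‖y i‖ ≤ M) :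
    Tendsto (fun i => ⟪e i, y i⟫) l (nhds 0) := by
  refine squeeze_zero_norm (fun i => ?_) (by simpa using he.norm.mul_const M)
  exact (norm_inner_le_norm (e i) (y i)).trans (by gcongr; exact hy i)

theorem tendsto_of_perturbed_recursion {x v e : ℕ → E} {γ : ℕ → ℝ} {z : E} {M B : ℝ}
    (hγ : ∀ n, 0 ≤ γ n) (hγ0 : Tendsto γ atTop (nhds 0))
    (hγdiv : Tendsto (fun N => ∑ n ∈ Finset.range N, γ n) atTop atTop)
    (he : Tendsto e atTop (nhds 0)) (hx : ∀ n, ‖x n - z‖ ≤ M) (hv : ∀ n, ‖v n‖ ≤ B)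
    (hdrift : ∀ n, 0 ≤ ⟪v n, x n - z⟫)
    (hdrift_pos : ∀ η > 0, ∃ c > 0, ∀ᶠ n in atTop, η ≤ ‖x n - z‖ → c ≤ ⟪v n, x n - z⟫)
    (hrec : ∀ n, x (n + 1) = x n - γ n • v n + γ n • e n) :
    Tendsto x atTop (nhds z) := by
  have hδ : Tendsto (fun n => 2 * ⟪e n, x n - z⟫ + γ n * ‖v n - e n‖ ^ 2) atTop (nhds 0) := by
    simpa using ((tendsto_inner_zero_of_norm_le he hx).const_mul 2).add
      (tendsto_mul_norm_sub_sq_zero hγ0 hv he)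
  have hstep : ∀ n, ‖x (n + 1) - z‖ ^ 2 = ‖x n - z‖ ^ 2 - γ n *
      (2 * ⟪v n, x n - z⟫ - (2 * ⟪e n, x n - z⟫ + γ n * ‖v n - e n‖ ^ 2)) := fun n => by
    rw [← norm_sub_smul_add_smul_sq, hrec n, add_sub_right_comm, sub_right_comm]
  have hdrift_sq : ∀ η > 0, ∃ c > 0, ∀ᶠ n in atTop,
      η ≤ ‖x n - z‖ ^ 2 → c ≤ 2 * ⟪v n, x n - z⟫ := by
    intro η hη
    obtain ⟨c, hc, hcn⟩ := hdrift_pos (√η) (Real.sqrt_pos.2 hη)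
    refine ⟨2 * c, by positivity, hcn.mono fun n hn hηn => ?_⟩
    linarith [hn (Real.sqrt_le_iff.2 ⟨norm_nonneg _, hηn⟩)]
  have hsq : Tendsto (fun n => ‖x n - z‖ ^ 2) atTop (nhds 0) :=
    tendsto_zero_of_perturbed_descent (fun n => sq_nonneg _) hγ hγ0 hγdiv hδ
      (fun n => mul_nonneg zero_le_two (hdrift n)) hdrift_sq fun n => (hstep n).le
  rw [tendsto_iff_norm_sub_tendsto_zero]
  simpa using hsq.sqrt

theorem exists_pos_le_inner_of_isCompact {C : Set E} {u : E → E} {z : E} (hC : IsCompact C)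
    (hu : ContinuousOn u C) (hpos : ∀ y ∈ C, y ≠ z → 0 < ⟪u y, y - z⟫) {η : ℝ} (hη : 0 < η) :
    ∃ c > 0, ∀ y ∈ C, η ≤ ‖y - z‖ → c ≤ ⟪u y, y - z⟫ := by
  have hK : IsCompact (C ∩ {y | η ≤ ‖y - z‖}) :=
    hC.inter_right (isClosed_le continuous_const (by fun_prop))
  have hcont : ContinuousOn (fun y => ⟪u y, y - z⟫) (C ∩ {y | η ≤ ‖y - z‖}) :=
    (hu.mono Set.inter_subset_left).inner (𝕜 := ℝ) (by fun_prop)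
  obtain ⟨c, hc, hcK⟩ := hK.exists_forall_le' hcont fun y hy =>
    hpos y hy.1 (sub_ne_zero.1 (norm_pos_iff.1 (hη.trans_le hy.2)))
  exact ⟨c, hc, fun y hyC hηy => hcK y ⟨hyC, hηy⟩⟩

theorem perturbed_recursion_tendsto_root_general {C : Set E} {u : E → E} {z : E}
    {γ : ℕ → ℝ} {ε x : ℕ → E} (hC : IsCompact C) (hu : ContinuousOn u C)
    (hpos : ∀ y ∈ C, y ≠ z → 0 < ⟪u y, y - z⟫)
    (hγ : ∀ n, 0 ≤ γ n) (hγ0 : Tendsto γ atTop (nhds 0))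
    (hγdiv : Tendsto (fun N => ∑ n ∈ Finset.range N, γ n) atTop atTop)
    (hε : Tendsto ε atTop (nhds 0)) (hxC : ∀ n, x n ∈ C)
    (hrec : ∀ n, x (n + 1) = x n - γ (n + 1) • u (x n) + γ (n + 1) • ε n) :
    Tendsto x atTop (nhds z) := by
  obtain ⟨M, hM⟩ := hC.exists_bound_of_continuousOn (f := fun y => y - z) (by fun_prop)
  obtain ⟨B, hB⟩ := hC.exists_bound_of_continuousOn hu
  have hγdiv_succ : Tendsto (fun N => ∑ n ∈ Finset.range N, γ (n + 1)) atTop atTop :=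
    Tendsto.atTop_of_add_const (γ 0) <| by
      simpa only [Finset.sum_range_succ'] using (tendsto_add_atTop_iff_nat 1).2 hγdiv
  have hdrift : ∀ n, 0 ≤ ⟪u (x n), x n - z⟫ := fun n => by
    rcases eq_or_ne (x n) z with heq | hne
    · simp [heq]
    · exact (hpos _ (hxC n) hne).le
  refine tendsto_of_perturbed_recursion (fun n => hγ (n + 1)) ((tendsto_add_atTop_iff_nat 1).2 hγ0)
    hγdiv_succ hε (fun n => hM _ (hxC n)) (fun n => hB _ (hxC n)) hdrift (fun η hη => ?_) hrec
  obtain ⟨c, hc, hcC⟩ := exists_pos_le_inner_of_isCompact hC hu hpos hη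
  exact ⟨c, hc, .of_forall fun n => hcC _ (hxC n)⟩

end InnerProductSpace

/-- **Lemma (deterministic convergence of a perturbed gradient-type recursion).**
If `u` is continuous with `u x* = 0` and `⟪u x, x - x*⟫ > 0` for `x ≠ x*`, the positive
steps satisfy `γ_n → 0` and `∑ γ_n = ∞`, the perturbations satisfy `ε_n → 0`, and the
sequence `x_{n+1} = x_n - γ_{n+1} u(x_n) + γ_{n+1} ε_n` stays in a compact set,
then `x_n → x*`. -/
theorem perturbed_recursion_tendsto_root
    {d : ℕ}
    (u : EuclideanSpace ℝ (Fin d) → EuclideanSpace ℝ (Fin d)) (hucont : Continuous u)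
    (xstar : EuclideanSpace ℝ (Fin d)) (hroot : u xstar = 0)
    (hmono : ∀ x, x ≠ xstar → 0 < ⟪u x, x - xstar⟫)
    (γ : ℕ → ℝ) (hγpos : ∀ n, 0 < γ n)
    (hγ0 : Tendsto γ atTop (nhds 0))
    (hγdiv : Tendsto (fun N => ∑ n ∈ Finset.range N, γ n) atTop atTop)
    (ε : ℕ → EuclideanSpace ℝ (Fin d)) (hε : Tendsto ε atTop (nhds 0))
    (x : ℕ → EuclideanSpace ℝ (Fin d))
    (C : Set (EuclideanSpace ℝ (Fin d))) (hC : IsCompact C) (hxC : ∀ n, x n ∈ C)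
    (hrec : ∀ n, x (n + 1) = x n - γ (n + 1) • u (x n) + γ (n + 1) • ε n) :
    Tendsto x atTop (nhds xstar) :=
  perturbed_recursion_tendsto_root_general hC hucont.continuousOn (fun y _ => hmono y)
    (fun n => (hγpos n).le) hγ0 hγdiv hε hxC hrec
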